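/- Let λ be a partition of d. Then, as endomorphisms of K[I(n,d)], Σ_{w ∈ S_d, cycle type of w = λ} ρ(w) = Σ_{D ∈ M(n,d)} c_{λ,D} · ξ_D, where the natural number c_{λ,D} = #{w ∈ S_d : cycle type of w is λ and w • j = i} for any (i,j) ∈ I(n,d) × I(n,d) with D(i,j) = D (this count is independent of the choice of such (i,j)). -/

import Mathlib

/-!
Evaluated at `f` and `i`, the right-hand side is `∑ j, c (Dmat i j) • f j`, because the condition
`Dmat i j = D` selects exactly one `D`, which lies in `M(n,d)` (`Dmat_mem_MFin`). By the defining
property of `c`, this counts `f j` once for each `w` of cycle type `λ` with `w • j = i`, that is,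
with `j = i ∘ w` (`permAct_eq_iff`). Sorting the left-hand side `∑ w, f (i ∘ w)` by the value
`j = i ∘ w` gives the same sum.

That the count depends only on `D(i,j)`, so that such a `c` exists, is `card_eq_of_Dmat_eq`.
-/

open Finset

noncomputable section

/-- The action of `S_d` on `I(n,d) = Fin d → Fin n`, `w • i = i ∘ w⁻¹`. -/
def permAct {n d : ℕ} (w : Equiv.Perm (Fin d)) (i : Fin d → Fin n) : Fin d → Fin n :=
  i ∘ ⇑w⁻¹

/-- The matrix `D(i,j)` with `(a,b)` entry `#{k | i k = a ∧ j k = b}`. -/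
def Dmat {n d : ℕ} (i j : Fin d → Fin n) : Matrix (Fin n) (Fin n) ℕ :=
  fun a b => (Finset.univ.filter (fun k => i k = a ∧ j k = b)).card

/-- `M(n,d)`: matrices of naturals with entries summing to `d`. -/
def Mset (n d : ℕ) : Set (Matrix (Fin n) (Fin n) ℕ) :=
  {D | ∑ a, ∑ b, D a b = d}

theorem Mset_finite (n d : ℕ) : (Mset n d).Finite := by
  apply Set.Finite.subset (Set.finite_range
    (fun f : Fin n → Fin n → Fin (d + 1) => (fun a b => ((f a b : ℕ)) : Matrix (Fin n) (Fin n) ℕ)))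
  intro D hD
  have hle : ∀ a b, D a b ≤ d := by
    intro a b
    have h1 : D a b ≤ ∑ b', D a b' :=
      Finset.single_le_sum (fun _ _ => Nat.zero_le _) (Finset.mem_univ b)
    have h2 : (∑ b', D a b') ≤ ∑ a', ∑ b', D a' b' :=
      Finset.single_le_sum (f := fun a' => ∑ b', D a' b') (fun _ _ => Nat.zero_le _)
        (Finset.mem_univ a)
    have h3 : ∑ a', ∑ b', D a' b' = d := hD
    omega
  exact ⟨fun a b => ⟨D a b, Nat.lt_succ_of_le (hle a b)⟩, rfl⟩

/-- `M(n,d)` as a finset. -/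
def MFin (n d : ℕ) : Finset (Matrix (Fin n) (Fin n) ℕ) := (Mset_finite n d).toFinset

/-- The action of `w ∈ S_d` on `K[I(n,d)]`, `(w • f)(i) = f (w⁻¹ • i)`, as a linear map. -/
def rho (K : Type*) [Field K] {n d : ℕ} (w : Equiv.Perm (Fin d)) :
    Module.End K ((Fin d → Fin n) → K) where
  toFun f := fun i => f (fun k => i (w k))
  map_add' _ _ := rfl
  map_smul' _ _ := rfl

/-- The operator `ξ_D` on `K[I(n,d)]`. -/
def xi (K : Type*) [Field K] {n d : ℕ} (D : Matrix (Fin n) (Fin n) ℕ) :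
    Module.End K ((Fin d → Fin n) → K) where
  toFun f := fun i => ∑ j ∈ Finset.univ.filter (fun j => Dmat i j = D), f j
  map_add' f g := by funext i; simp [Finset.sum_add_distrib]
  map_smul' c f := by funext i; simp [Finset.mul_sum]

/-- `w ∈ S_d` has cycle type the partition `λ` of `d` (fixed points counted as
`1`-cycles). -/
def HasCycleType {d : ℕ} (w : Equiv.Perm (Fin d)) (lam : Nat.Partition d) : Prop :=
  w.partition.parts = lam.parts

instance {d : ℕ} (lam : Nat.Partition d) :
    DecidablePred (fun w : Equiv.Perm (Fin d) => HasCycleType w lam) := fun w =>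
  inferInstanceAs (Decidable (w.partition.parts = lam.parts))

theorem permAct_eq_iff {n d : ℕ} (w : Equiv.Perm (Fin d)) (i j : Fin d → Fin n) :
    permAct w j = i ↔ j = fun k => i (w k) := by
  constructor
  · rintro rfl
    funext k
    simp [permAct]
  · rintro rfl
    funext k
    simp [permAct]

theorem Dmat_mem_MFin {n d : ℕ} (i j : Fin d → Fin n) : Dmat i j ∈ MFin n d := by
  have h := Finset.card_eq_sum_card_fiberwise (s := (univ : Finset (Fin d)))
    (t := (univ : Finset (Fin n × Fin n))) (f := fun k => (i k, j k)) (fun _ _ => by simp)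
  rw [Fintype.sum_prod_type] at h
  simp only [Prod.mk.injEq, card_univ, Fintype.card_fin] at h
  simp only [MFin, Set.Finite.mem_toFinset, Mset, Set.mem_ofPred_eq, Dmat]
  exact h.symm

/-- Pairs with the same matrix lie in one diagonal `S_d`-orbit: the fibres of
`k ↦ (i k, j k)` and `k ↦ (i' k, j' k)` have equal sizes, so they can be matched up. -/
theorem exists_perm_of_Dmat_eq {n d : ℕ} {i j i' j' : Fin d → Fin n}
    (h : Dmat i j = Dmat i' j') :
    ∃ s : Equiv.Perm (Fin d), ∀ k, i' (s k) = i k ∧ j' (s k) = j k := by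
  have e : ∀ p : Fin n × Fin n,
      Nonempty ({k // (i k, j k) = p} ≃ {k // (i' k, j' k) = p}) := by
    rintro ⟨a, b⟩
    refine Fintype.card_eq.mp ?_
    have := congrFun (congrFun h a) b
    simpa [Dmat, Fintype.card_subtype] using this
  refine ⟨Equiv.ofFiberEquiv (f := fun k => (i k, j k)) (g := fun k => (i' k, j' k))
    (fun p => (e p).some), fun k => ?_⟩
  have := Equiv.ofFiberEquiv_map (f := fun k => (i k, j k)) (g := fun k => (i' k, j' k))
    (fun p => (e p).some) k
  simpa using this

/-- The count defining `c_{λ,D}` depends on `(i, j)` only through `D(i,j)`, so a function `c`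
as in the theorem exists: conjugation by a permutation carrying `(i, j)` to `(i', j')` preserves
cycle types and matches the two sets of permutations. -/
theorem card_eq_of_Dmat_eq {n d : ℕ} (lam : Nat.Partition d) {i j i' j' : Fin d → Fin n}
    (h : Dmat i j = Dmat i' j') :
    Nat.card {w : Equiv.Perm (Fin d) // HasCycleType w lam ∧ permAct w j = i}
      = Nat.card {w : Equiv.Perm (Fin d) // HasCycleType w lam ∧ permAct w j' = i'} := by
  obtain ⟨s, hs⟩ := exists_perm_of_Dmat_eq h
  refine Nat.card_congr ((MulAut.conj s).toEquiv.subtypeEquiv fun w => ?_)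
  have hp : (s * w * s⁻¹).partition = w.partition :=
    (Equiv.Perm.partition_eq_of_isConj.mp (isConj_iff.mpr ⟨s, rfl⟩)).symm
  simp only [HasCycleType, MulEquiv.toEquiv_eq_coe, MulEquiv.coe_toEquiv, MulAut.conj_apply, hp]
  refine and_congr_right fun _ => ?_
  rw [permAct_eq_iff, permAct_eq_iff, funext_iff, funext_iff]
  rw [← s.forall_congr_right (q := fun k => j' k = i' ((s * w * s⁻¹) k))]
  simp [hs]

/-- The class sum `∑_{ρ(w) = λ} ρ(w)` expands as `∑_D c_{λ,D} ξ_D` in the Schur algebra,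
where `c_{λ,D} = #{w : cycle type of w is λ and w • j = i}` for any `(i,j)` with
`D(i,j) = D`. -/
theorem class_sum_eq_sum_c_xi (K : Type*) [Field K] (n d : ℕ) (hn : 0 < n) (hd : 0 < d)
    (lam : Nat.Partition d) (c : Matrix (Fin n) (Fin n) ℕ → ℕ)
    (hc : ∀ i j : Fin d → Fin n,
      c (Dmat i j)
        = Nat.card {w : Equiv.Perm (Fin d) // HasCycleType w lam ∧ permAct w j = i}) :
    ∑ w ∈ Finset.univ.filter (fun w : Equiv.Perm (Fin d) => HasCycleType w lam),
        rho K (n := n) w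
      = ∑ D ∈ MFin n d, c D • xi K D := by
  refine LinearMap.ext fun f => funext fun i => ?_
  simp only [LinearMap.sum_apply, LinearMap.smul_apply, Finset.sum_apply, Pi.smul_apply]
  have hcard : ∀ j : Fin d → Fin n, c (Dmat i j) =
      #{w ∈ univ.filter (fun w : Equiv.Perm (Fin d) => HasCycleType w lam) |
        (fun k => i (w k)) = j} := by
    intro j
    rw [hc, Finset.filter_filter]
    refine Nat.subtype_card _ fun w => ?_
    rw [permAct_eq_iff, eq_comm (a := j)]
    simp
  calc ∑ w ∈ univ.filter (fun w : Equiv.Perm (Fin d) => HasCycleType w lam),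
          rho K (n := n) w f i
      = ∑ j : Fin d → Fin n, c (Dmat i j) • f j := by
        rw [← Finset.sum_fiberwise _ (fun (w : Equiv.Perm (Fin d)) k => i (w k))]
        refine Finset.sum_congr rfl fun j _ => ?_
        rw [hcard, ← Finset.sum_const]
        refine Finset.sum_congr rfl fun w hw => ?_
        exact congrArg f (Finset.mem_filter.mp hw).2
    _ = ∑ D ∈ MFin n d, c D • xi K D f i := by
        rw [← Finset.sum_fiberwise_of_maps_to (fun j _ => Dmat_mem_MFin i j)]
        refine Finset.sum_congr rfl fun D _ => ?_
        simp only [xi, LinearMap.coe_mk, AddHom.coe_mk, Finset.smul_sum]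
        refine Finset.sum_congr rfl fun j hj => ?_
        rw [(Finset.mem_filter.mp hj).2]

end
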